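/- arXiv:2104.00715 — 2 statements merged into one kernel-verified Lean document; each statement's English description precedes it below -/
import Mathlib

section
/- If V and W are graded representations of a finite group Γ that are both strongly equivariantly log concave, then the graded representation V ⊗ W, with (V⊗W)^m = ⊕_{p+q=m} V^p ⊗ W^q, is strongly equivariantly log concave. -/
open CategoryTheory MonoidalCategory

noncomputable section

/-- The external direct sum of a finite family of representations. -/
def Representation.pi' {k G : Type*} [CommSemiring k] [Monoid G] {ι : Type*}
    {M : ι → Type*} [∀ i, AddCommMonoid (M i)] [∀ i, Module k (M i)]
    (ρ : ∀ i, Representation k G (M i)) : Representation k G (∀ i, M i) where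
  toFun g := LinearMap.pi fun i => (ρ i g) ∘ₗ LinearMap.proj i
  map_one' := by ext; simp
  map_mul' g h := by ext; simp

variable {G : Type} [Group G] [Fintype G]

/-- `X` is isomorphic to a subrepresentation of `Y`. -/
def IsSubrep (X Y : FDRep ℚ G) : Prop := ∃ f : X ⟶ Y, Mono f

/-- A graded representation is strongly equivariantly log concave if `V^i ⊗ V^l` is
isomorphic to a subrepresentation of `V^j ⊗ V^k` whenever `i ≤ j ≤ k ≤ l` and
`j + k = i + l`. -/
def StrongELC (V : ℕ → FDRep ℚ G) : Prop :=
  ∀ i j k l : ℕ, i ≤ j → j ≤ k → k ≤ l → j + k = i + l →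
    IsSubrep (V i ⊗ V l) (V j ⊗ V k)

/-- The degree-`m` piece `⊕_{p+q=m} V^p ⊗ W^q` of the tensor product of two graded
representations. -/
def gradedTensor (V W : ℕ → FDRep ℚ G) (m : ℕ) : FDRep ℚ G :=
  FDRep.of (Representation.pi' fun p : Fin (m + 1) =>
    Representation.tprod (V p).ρ (W (m - (p : ℕ))).ρ)

/-!
In characteristic zero a finite-dimensional representation `ρ` of a finite group embeds in `σ` if
and only if `χ_σ - χ_ρ` is the character of a representation, and such characters form a
subsemiring `P` of the ring of functions on the group. So strong equivariant log concavity says that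
`χ_j χ_k - χ_i χ_l ∈ P`, i.e. that the `2 × 2` minors of the Toeplitz matrix of the sequence of
characters lie in `P`. The Toeplitz matrix of `V ⊗ W` is the product of those of `V` and `W`, and by
the Cauchy–Binet formula its `2 × 2` minors are sums of products of theirs.
-/

open Finset Representation

section StrongLogConcavity

variable {R S : Type*} [CommRing R] [SetLike S R] {P : S}

/-- Strong log concavity of a sequence in a ring, where `x ≤ y` means `y - x ∈ P` for a
distinguished set `P` of elements counted as nonnegative. The index type is `ℕ` for graded objects
and `ℤ` for their extensions by zero. -/
def IsStronglyLogConcave {ι : Type*} [Add ι] [LE ι] (P : S) (a : ι → R) : Prop :=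
  ∀ i j k l : ι, i ≤ j → j ≤ k → k ≤ l → j + k = i + l → a j * a k - a i * a l ∈ P

/-- The extension of a sequence by zero to negative indices. -/
def zeroExtend (a : ℕ → R) : ℤ → R :=
  Function.extend (Nat.cast : ℕ → ℤ) a 0

@[simp]
theorem zeroExtend_natCast (a : ℕ → R) (n : ℕ) : zeroExtend a n = a n :=
  (Nat.cast_injective (R := ℤ)).extend_apply a _ n

theorem zeroExtend_of_neg (a : ℕ → R) {n : ℤ} (hn : n < 0) : zeroExtend a n = 0 :=
  Function.extend_apply' a _ n (by rintro ⟨_, rfl⟩; omega)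

theorem sum_zeroExtend_mul_zeroExtend (a b : ℕ → R) {x z : ℤ} {m : ℕ} (hm : x - z = m)
    {s : Finset ℤ} (hs : Icc z x ⊆ s) :
    ∑ y ∈ s, zeroExtend a (x - y) * zeroExtend b (y - z) =
      ∑ p ∈ antidiagonal m, a p.1 * b p.2 := by
  have vanish_off : ∀ y ∈ s, y ∉ Icc z x → zeroExtend a (x - y) * zeroExtend b (y - z) = 0 := by
    intro y _ hy
    rw [mem_Icc, not_and_or, not_le, not_le] at hy
    rcases hy with hyz | hxy
    · rw [zeroExtend_of_neg b (by omega), mul_zero]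
    · rw [zeroExtend_of_neg a (by omega), zero_mul]
  rw [← sum_subset hs vanish_off]
  symm
  refine sum_bij' (fun p _ ↦ z + p.2) (fun y _ ↦ ((x - y).toNat, (y - z).toNat)) ?_ ?_ ?_ ?_ ?_
  · intro p hp
    simp only [HasAntidiagonal.mem_antidiagonal, mem_Icc] at hp ⊢
    omega
  · intro y hy
    simp only [HasAntidiagonal.mem_antidiagonal, mem_Icc] at hy ⊢
    omega
  · rintro ⟨p, q⟩ hp
    simp only [HasAntidiagonal.mem_antidiagonal, Prod.mk.injEq] at hp ⊢
    omega
  · intro y hy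
    simp only [mem_Icc] at hy ⊢
    omega
  · rintro ⟨p, q⟩ hp
    have hx : x - (z + q) = p := by rw [HasAntidiagonal.mem_antidiagonal] at hp; omega
    rw [hx, add_sub_cancel_left, zeroExtend_natCast, zeroExtend_natCast]

theorem IsStronglyLogConcave.toeplitz_minor_mem {ι : Type*} [AddCommGroup ι] [LinearOrder ι]
    [IsOrderedAddMonoid ι] {a : ι → R} (ha : IsStronglyLogConcave P a) {x₁ x₂ y₁ y₂ : ι}
    (hx : x₁ ≤ x₂) (hy : y₁ ≤ y₂) :
    a (x₁ - y₁) * a (x₂ - y₂) - a (x₁ - y₂) * a (x₂ - y₁) ∈ P := by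
  rcases le_total (x₁ - y₁) (x₂ - y₂) with h | h
  · exact ha _ _ _ _ (sub_le_sub_left hy x₁) h (sub_le_sub_left hy x₂) (by abel)
  · rw [mul_comm (a (x₁ - y₁))]
    exact ha _ _ _ _ (sub_le_sub_right hx y₂) h (sub_le_sub_right hx y₁) (by abel)

variable [NonUnitalSubsemiringClass S R]

theorem zeroExtend_mem {a : ℕ → R} (ha : ∀ n, a n ∈ P) (n : ℤ) : zeroExtend a n ∈ P := by
  rcases lt_or_ge n 0 with hn | hn
  · exact zeroExtend_of_neg a hn ▸ zero_mem P
  · lift n to ℕ using hn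
    exact zeroExtend_natCast a n ▸ ha n

theorem isStronglyLogConcave_zeroExtend {a : ℕ → R} (ha : IsStronglyLogConcave P a)
    (ha_mem : ∀ n, a n ∈ P) : IsStronglyLogConcave P (zeroExtend a) := by
  intro i j k l hij hjk hkl h
  rcases lt_or_ge i 0 with hi | hi
  · rw [zeroExtend_of_neg a hi, zero_mul, sub_zero]
    exact mul_mem (zeroExtend_mem ha_mem j) (zeroExtend_mem ha_mem k)
  · lift i to ℕ using hi
    lift j to ℕ using by omega
    lift k to ℕ using by omega
    lift l to ℕ using by omega
    simp only [zeroExtend_natCast]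
    exact ha i j k l (by omega) (by omega) (by omega) (by omega)

theorem cauchyBinet_mem {ι : Type*} [LinearOrder ι] {u₁ u₂ v₁ v₂ : ι → R}
    (hu : ∀ x y, x < y → u₁ x * u₂ y - u₁ y * u₂ x ∈ P)
    (hv : ∀ x y, x < y → v₁ x * v₂ y - v₁ y * v₂ x ∈ P) (s : Finset ι) :
    (∑ x ∈ s, u₁ x * v₁ x) * (∑ x ∈ s, u₂ x * v₂ x) -
      (∑ x ∈ s, u₁ x * v₂ x) * (∑ x ∈ s, u₂ x * v₁ x) ∈ P := by
  induction s using Finset.induction_on_max with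
  | empty => simp [zero_mem]
  | insert y s hs ih =>
    have minors_mem :
        ∑ x ∈ s, (u₁ x * u₂ y - u₁ y * u₂ x) * (v₁ x * v₂ y - v₁ y * v₂ x) ∈ P :=
      sum_mem fun x hx ↦ mul_mem (hu x y (hs x hx)) (hv x y (hs x hx))
    have sum_minors :
        ∑ x ∈ s, (u₁ x * u₂ y - u₁ y * u₂ x) * (v₁ x * v₂ y - v₁ y * v₂ x) =
          (∑ x ∈ s, u₁ x * v₁ x) * (u₂ y * v₂ y) - (∑ x ∈ s, u₁ x * v₂ x) * (u₂ y * v₁ y) -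
            (∑ x ∈ s, u₂ x * v₁ x) * (u₁ y * v₂ y) + (∑ x ∈ s, u₂ x * v₂ x) * (u₁ y * v₁ y) := by
      simp only [sum_mul, ← sum_sub_distrib, ← sum_add_distrib]
      exact sum_congr rfl fun x _ ↦ by ring
    have hy : y ∉ s := fun hy ↦ (hs y hy).false
    convert add_mem ih minors_mem using 1
    rw [sum_minors]
    simp only [sum_insert hy]
    ring

theorem IsStronglyLogConcave.sum_antidiagonal {a b : ℕ → R} (ha : IsStronglyLogConcave P a)
    (hb : IsStronglyLogConcave P b) (ha_mem : ∀ n, a n ∈ P) (hb_mem : ∀ n, b n ∈ P) :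
    IsStronglyLogConcave P fun m ↦ ∑ p ∈ antidiagonal m, a p.1 * b p.2 := by
  intro i j k l hij hjk _ h
  -- The four convolutions are the entries of the product of a two-row submatrix of the Toeplitz
  -- matrix of `a` (rows `j`, `l`) and a two-column one of that of `b` (columns `0`, `j - i`).
  have minor_a (x y : ℤ) (hxy : x < y) :=
    (isStronglyLogConcave_zeroExtend ha ha_mem).toeplitz_minor_mem
      (show (j : ℤ) ≤ l by omega) hxy.le
  have minor_b (x y : ℤ) (hxy : x < y) :=
    (isStronglyLogConcave_zeroExtend hb hb_mem).toeplitz_minor_mem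
      hxy.le (show (0 : ℤ) ≤ j - i by omega)
  have det_mem := cauchyBinet_mem minor_a
    (fun x y hxy ↦ mul_comm (zeroExtend b (x - (j - i))) _ ▸ minor_b x y hxy) (Icc (0 : ℤ) l)
  have subset {z x : ℤ} (hz : 0 ≤ z) (hx : x ≤ l) : Icc z x ⊆ Icc (0 : ℤ) l := Icc_subset_Icc hz hx
  rwa [sum_zeroExtend_mul_zeroExtend a b (m := j) (by omega) (subset (by omega) (by omega)),
    sum_zeroExtend_mul_zeroExtend a b (m := k) (by omega) (subset (by omega) (by omega)),
    sum_zeroExtend_mul_zeroExtend a b (m := i) (by omega) (subset (by omega) (by omega)),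
    sum_zeroExtend_mul_zeroExtend a b (m := l) (by omega) (subset (by omega) (by omega))]
    at det_mem

end StrongLogConcavity

section Characters

variable {k Γ : Type*} [Field k] [Monoid Γ]

theorem character_prod {M N : Type*} [AddCommGroup M] [Module k M] [FiniteDimensional k M]
    [AddCommGroup N] [Module k N] [FiniteDimensional k N]
    (ρ : Representation k Γ M) (σ : Representation k Γ N) :
    (ρ.prod σ).character = ρ.character + σ.character :=
  funext fun g ↦ LinearMap.trace_prodMap' (ρ g) (σ g)

theorem character_pi' {ι : Type*} [Fintype ι] {M : ι → Type*} [∀ i, AddCommGroup (M i)]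
    [∀ i, Module k (M i)] [∀ i, FiniteDimensional k (M i)] (ρ : ∀ i, Representation k Γ (M i)) :
    (pi' ρ).character = ∑ i, (ρ i).character := by
  classical
  ext g
  have block_sum : pi' ρ g = ∑ i, LinearMap.single k M i ∘ₗ ρ i g ∘ₗ LinearMap.proj i := by
    ext i x j
    simp [pi']
  have trace_block (i : ι) : LinearMap.trace k (∀ i, M i)
      (LinearMap.single k M i ∘ₗ ρ i g ∘ₗ LinearMap.proj i) = (ρ i).character g := by
    rw [LinearMap.trace_comp_comm', LinearMap.comp_assoc, LinearMap.proj_comp_single_same,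
      LinearMap.comp_id, character]
  rw [character, block_sum, map_sum, Finset.sum_apply]
  exact sum_congr rfl fun i _ ↦ trace_block i

theorem exists_fin_character_eq {M : Type*} [AddCommGroup M] [Module k M] [FiniteDimensional k M]
    (ρ : Representation k Γ M) :
    ∃ n, ∃ σ : Representation k Γ (Fin n → k), σ.character = ρ.character :=
  let e := (Module.finBasis k M).equivFun
  ⟨_, (e.conjAlgEquiv k).toMonoidHom.comp ρ, funext fun g ↦ LinearMap.trace_conj' (ρ g) e⟩

variable (k Γ) in
/-- The semiring of characters of finite-dimensional representations, as opposed to virtual ones.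
Representations on the spaces `Fin n → k` suffice, and keep the definition free of universe
levels. -/
def characterSubsemiring : Subsemiring (Γ → k) where
  carrier := {χ | ∃ n, ∃ ρ : Representation k Γ (Fin n → k), ρ.character = χ}
  zero_mem' := ⟨0, trivial k Γ _, funext fun g ↦ by simp [character]⟩
  one_mem' := by
    obtain ⟨n, ρ, hρ⟩ := exists_fin_character_eq (trivial k Γ k)
    exact ⟨n, ρ, hρ.trans (funext fun g ↦ by simp [character])⟩
  add_mem' := by
    rintro _ _ ⟨_, ρ, rfl⟩ ⟨_, σ, rfl⟩
    exact character_prod ρ σ ▸ exists_fin_character_eq (ρ.prod σ)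
  mul_mem' := by
    rintro _ _ ⟨_, ρ, rfl⟩ ⟨_, σ, rfl⟩
    exact char_tensor ρ σ ▸ exists_fin_character_eq (ρ.tprod σ)

theorem character_mem_characterSubsemiring {M : Type*} [AddCommGroup M] [Module k M]
    [FiniteDimensional k M] (ρ : Representation k Γ M) :
    ρ.character ∈ characterSubsemiring k Γ :=
  exists_fin_character_eq ρ

end Characters

section Embeddings

variable {k Γ M N L : Type*} [Field k]
  [AddCommGroup M] [Module k M] [AddCommGroup N] [Module k N] [AddCommGroup L] [Module k L]

/-- `ρ` is isomorphic to a subrepresentation of `σ`. -/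
def Embeds [Monoid Γ] (ρ : Representation k Γ M) (σ : Representation k Γ N) : Prop :=
  ∃ f : IntertwiningMap ρ σ, Function.Injective f

section Monoid

variable [Monoid Γ] {ρ : Representation k Γ M} {σ : Representation k Γ N}
  {τ : Representation k Γ L}

theorem Embeds.trans (hρσ : Embeds ρ σ) (hστ : Embeds σ τ) : Embeds ρ τ :=
  let ⟨f, hf⟩ := hρσ
  let ⟨g, hg⟩ := hστ
  ⟨g.comp f, hg.comp hf⟩

theorem embeds_of_equiv (e : ρ.Equiv σ) : Embeds ρ σ :=
  ⟨e.toIntertwiningMap, e.injective⟩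

theorem Embeds.prod_left (h : Embeds ρ σ) (τ : Representation k Γ L) :
    Embeds (τ.prod ρ) (τ.prod σ) :=
  let ⟨f, hf⟩ := h
  ⟨(IntertwiningMap.fst k τ ρ).prod (f.comp (IntertwiningMap.snd k τ ρ)),
    Function.injective_id.prodMap hf⟩

/-- The inclusion of a subrepresentation as an intertwining map. -/
def subrepresentationInclusion (S : Subrepresentation ρ) :
    IntertwiningMap S.toRepresentation ρ where
  toLinearMap := S.toSubmodule.subtype
  isIntertwining' _ := rfl

theorem embeds_toRepresentation (S : Subrepresentation ρ) : Embeds S.toRepresentation ρ :=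
  ⟨subrepresentationInclusion S, Subtype.val_injective⟩

theorem isCompl_toSubmodule {S T : Subrepresentation ρ} (h : IsCompl S T) :
    IsCompl S.toSubmodule T.toSubmodule := by
  rw [isCompl_iff, disjoint_iff, codisjoint_iff] at h ⊢
  exact h.imp (congrArg Subrepresentation.toSubmodule) (congrArg Subrepresentation.toSubmodule)

end Monoid

section FiniteGroup

variable [Group Γ] [Finite Γ] {ρ : Representation k Γ M} {σ : Representation k Γ N}
  {τ : Representation k Γ L}

theorem Embeds.exists_prod_equiv [NeZero (Nat.card Γ : k)] (h : Embeds ρ σ) :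
    ∃ S : Subrepresentation σ, Nonempty ((ρ.prod S.toRepresentation).Equiv σ) := by
  obtain ⟨f, hf⟩ := h
  obtain ⟨S, hS⟩ := exists_isCompl f.range
  let e : (M × S.toSubmodule) ≃ₗ[k] N :=
    ((LinearEquiv.ofInjective f.toLinearMap hf).prodCongr (.refl k S.toSubmodule)).trans
      (Submodule.prodEquivOfIsCompl _ _ (isCompl_toSubmodule hS))
  have e_apply (x : M × S.toSubmodule) : e x = f x.1 + x.2 :=
    Submodule.coe_prodEquivOfIsCompl' _ _ (isCompl_toSubmodule hS) _
  refine ⟨S, ⟨.mk e fun g ↦ LinearMap.ext fun x ↦ ?_⟩⟩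
  simp [e_apply, f.isIntertwining, Representation.prod, Subrepresentation.toRepresentation]

theorem exists_common_subrepresentation_of_ne_zero [NeZero (Nat.card Γ : k)]
    {f : IntertwiningMap ρ σ} (hf : f ≠ 0) :
    ∃ S : Subrepresentation ρ, Nontrivial S.toSubmodule ∧ Embeds S.toRepresentation σ := by
  obtain ⟨S, hS⟩ := exists_isCompl f.ker
  have ker_compl := isCompl_toSubmodule hS
  refine ⟨S, ?_, f.comp (subrepresentationInclusion S), ?_⟩
  · rw [Submodule.nontrivial_iff_ne_bot]
    intro hbot
    have ker_eq_top : f.ker.toSubmodule = ⊤ := eq_top_of_isCompl_bot (hbot ▸ ker_compl)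
    exact hf (IntertwiningMap.ext (LinearMap.ker_eq_top.mp ker_eq_top))
  · exact LinearMap.injective_domRestrict_iff.mpr ker_compl.symm.disjoint

variable [CharZero k] [FiniteDimensional k M] [FiniteDimensional k N] [FiniteDimensional k L]

theorem finrank_intertwiningMap_of_character_eq_add {K : Type*} [AddCommGroup K] [Module k K]
    [FiniteDimensional k K] (π : Representation k Γ K)
    (h : σ.character = ρ.character + τ.character) :
    Module.finrank k (IntertwiningMap π σ) =
      Module.finrank k (IntertwiningMap π ρ) + Module.finrank k (IntertwiningMap π τ) := by
  have : Fintype Γ := Fintype.ofFinite Γ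
  have : Invertible (Nat.card Γ : k) := invertibleOfNonzero (NeZero.ne _)
  rw [← Nat.cast_inj (R := k)]
  push_cast
  simp only [← card_inv_mul_sum_char_mul_char_eq_finrank, h, Pi.add_apply, add_mul,
    sum_add_distrib, mul_add]

theorem exists_intertwiningMap_ne_zero_of_character_eq_add [Nontrivial M]
    (h : σ.character = ρ.character + τ.character) : ∃ f : IntertwiningMap ρ σ, f ≠ 0 := by
  have id_ne_zero : IntertwiningMap.id ρ ≠ 0 := by
    obtain ⟨x, hx⟩ := exists_ne (0 : M)
    exact fun h0 ↦ hx (DFunLike.congr_fun h0 x)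
  have : Nontrivial (IntertwiningMap ρ ρ) := ⟨_, _, id_ne_zero⟩
  have : 0 < Module.finrank k (IntertwiningMap ρ σ) := by
    rw [finrank_intertwiningMap_of_character_eq_add ρ h]
    exact Nat.add_pos_left Module.finrank_pos _
  have := Module.nontrivial_of_finrank_pos this
  exact exists_ne 0

theorem embeds_of_character_eq_add {M N : Type*} [AddCommGroup M] [Module k M]
    [FiniteDimensional k M] [AddCommGroup N] [Module k N] [FiniteDimensional k N]
    {ρ : Representation k Γ M} {σ : Representation k Γ N}
    (h : σ.character = ρ.character + τ.character) : Embeds ρ σ := by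
  induction hn : Module.finrank k M using Nat.strong_induction_on generalizing M N with
  | _ n ih =>
    rcases subsingleton_or_nontrivial M with hM | hM
    · exact ⟨0, Function.injective_of_subsingleton _⟩
    obtain ⟨f, hf⟩ := exists_intertwiningMap_ne_zero_of_character_eq_add h
    obtain ⟨S, hS, S_embeds⟩ := exists_common_subrepresentation_of_ne_zero hf
    obtain ⟨T, ⟨eρ⟩⟩ := (embeds_toRepresentation S).exists_prod_equiv
    obtain ⟨U, ⟨eσ⟩⟩ := S_embeds.exists_prod_equiv
    have character_U :
        U.toRepresentation.character = T.toRepresentation.character + τ.character := by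
      rw [← char_iso eρ, ← char_iso eσ, character_prod, character_prod, add_assoc] at h
      exact add_left_cancel h
    have finrank_T_lt : Module.finrank k T.toSubmodule < n := by
      rw [← hn, ← eρ.toLinearEquiv.finrank_eq, Module.finrank_prod]
      exact Nat.lt_add_of_pos_left Module.finrank_pos
    have T_embeds : Embeds T.toRepresentation U.toRepresentation :=
      ih _ finrank_T_lt character_U rfl
    exact (embeds_of_equiv eρ.symm).trans
      ((T_embeds.prod_left S.toRepresentation).trans (embeds_of_equiv eσ))

theorem embeds_iff_character_sub_mem :
    Embeds ρ σ ↔ σ.character - ρ.character ∈ characterSubsemiring k Γ := by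
  constructor
  · intro h
    obtain ⟨S, ⟨e⟩⟩ := h.exists_prod_equiv
    rw [← char_iso e, character_prod, add_sub_cancel_left]
    exact character_mem_characterSubsemiring S.toRepresentation
  · rintro ⟨n, τ, hτ⟩
    exact embeds_of_character_eq_add (eq_add_of_sub_eq' hτ.symm)

end FiniteGroup

end Embeddings

section GradedRepresentations

variable {k Γ : Type*} [Field k]
  {V W : ℕ → Type*} [∀ n, AddCommGroup (V n)] [∀ n, Module k (V n)]
  [∀ n, AddCommGroup (W n)] [∀ n, Module k (W n)]

section Monoid

variable [Monoid Γ]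

/-- Strong equivariant log concavity of a graded representation, over any field. -/
def IsStronglyEquivariantlyLogConcave (ρ : ∀ n, Representation k Γ (V n)) : Prop :=
  ∀ i j k l : ℕ, i ≤ j → j ≤ k → k ≤ l → j + k = i + l →
    Embeds ((ρ i).tprod (ρ l)) ((ρ j).tprod (ρ k))

/-- The tensor product of two graded representations, over any field. -/
def gradedTprod (ρ : ∀ n, Representation k Γ (V n)) (σ : ∀ n, Representation k Γ (W n)) (m : ℕ) :
    Representation k Γ (∀ p : Fin (m + 1), TensorProduct k (V p) (W (m - (p : ℕ)))) :=
  pi' fun p : Fin (m + 1) ↦ (ρ p).tprod (σ (m - (p : ℕ)))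

theorem character_gradedTprod [∀ n, FiniteDimensional k (V n)] [∀ n, FiniteDimensional k (W n)]
    (ρ : ∀ n, Representation k Γ (V n)) (σ : ∀ n, Representation k Γ (W n)) (m : ℕ) :
    (gradedTprod ρ σ m).character =
      ∑ p ∈ antidiagonal m, (ρ p.1).character * (σ p.2).character := by
  rw [gradedTprod, character_pi',
    Finset.Nat.sum_antidiagonal_eq_sum_range_succ fun p q ↦ (ρ p).character * (σ q).character,
    Finset.sum_range]
  exact sum_congr rfl fun p _ ↦ char_tensor _ _

end Monoid

variable [CharZero k] [Group Γ] [Finite Γ]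
  [∀ n, FiniteDimensional k (V n)] [∀ n, FiniteDimensional k (W n)]
  {ρ : ∀ n, Representation k Γ (V n)} {σ : ∀ n, Representation k Γ (W n)}

theorem isStronglyEquivariantlyLogConcave_iff_character :
    IsStronglyEquivariantlyLogConcave ρ ↔
      IsStronglyLogConcave (characterSubsemiring k Γ) fun n ↦ (ρ n).character := by
  simp only [IsStronglyEquivariantlyLogConcave, IsStronglyLogConcave,
    embeds_iff_character_sub_mem, char_tensor]

theorem stmt5_general (hρ : IsStronglyEquivariantlyLogConcave ρ)
    (hσ : IsStronglyEquivariantlyLogConcave σ) :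
    IsStronglyEquivariantlyLogConcave (gradedTprod ρ σ) := by
  rw [isStronglyEquivariantlyLogConcave_iff_character] at hρ hσ ⊢
  simpa only [character_gradedTprod] using hρ.sum_antidiagonal hσ
    (fun n ↦ character_mem_characterSubsemiring (ρ n))
    (fun n ↦ character_mem_characterSubsemiring (σ n))

end GradedRepresentations

theorem isSubrep_iff_embeds {Γ : Type} [Group Γ] (X Y : FDRep ℚ Γ) :
    IsSubrep X Y ↔ Embeds X.ρ Y.ρ := by
  let F := forget₂ (FDRep ℚ Γ) (Rep ℚ Γ)
  constructor
  · rintro ⟨f, _⟩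
    exact ⟨(F.map f).hom, (Rep.mono_iff_injective (F.map f)).mp inferInstance⟩
  · rintro ⟨f, hf⟩
    obtain ⟨f', hf'⟩ := F.map_surjective (Rep.ofHom f : F.obj X ⟶ F.obj Y)
    exact ⟨f', F.mono_of_mono_map (hf' ▸ (Rep.mono_iff_injective (Rep.ofHom f)).mpr hf)⟩

theorem strongELC_iff {Γ : Type} [Group Γ] (V : ℕ → FDRep ℚ Γ) :
    StrongELC V ↔ IsStronglyEquivariantlyLogConcave fun n ↦ (V n).ρ := by
  simp only [StrongELC, isSubrep_iff_embeds]
  rfl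

/-- If `V` and `W` are strongly equivariantly log concave graded representations of a
finite group `G`, then so is `V ⊗ W`. -/
theorem stmt5 (V W : ℕ → FDRep ℚ G) (hV : StrongELC V) (hW : StrongELC W) :
    StrongELC (gradedTensor V W) := by
  rw [strongELC_iff] at hV hW ⊢
  exact stmt5_general hV hW

end
end

section
/- Let A(M) = E/I be the Orlik–Solomon-type presentation of the cohomology of the configuration space Conf(n, ℂ): the exterior algebra over ℚ on generators x_{ij} for distinct i, j ∈ [n], modulo the relations x_{ij} − x_{ji} and x_{ij}x_{jk} + x_{jk}x_{ki} + x_{ki}x_{ij} for distinct i, j, k. Then the subalgebra B generated by differences x_{ij} − x_{kl} of the generators, together with the element t = Σ_{i≠j} x_{ij}, satisfies A ≅ B ⊗ Λ[t] as graded vector spaces; in particular dim A^i = dim B^i + dim B^{i−1}. -/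
noncomputable section

/-- Ordered pairs of distinct elements of `Fin n`, indexing the generators `x_{ij}`. -/
abbrev Pairs (n : ℕ) := {p : Fin n × Fin n // p.1 ≠ p.2}

/-- The exterior algebra `E` over `ℚ` on generators `x_{ij}`, `i ≠ j ∈ [n]`. -/
abbrev Ealg (n : ℕ) := ExteriorAlgebra ℚ (Pairs n → ℚ)

/-- The generator `x_{ij}` of the exterior algebra. -/
def xGen (n : ℕ) (p : Pairs n) : Ealg n := ExteriorAlgebra.ι ℚ (Pi.single p 1)

/-- The Orlik–Solomon relations: `x_{ij} = x_{ji}` and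
`x_{ij}x_{jk} + x_{jk}x_{ki} + x_{ki}x_{ij} = 0` for distinct `i, j, k`. -/
inductive relA (n : ℕ) : Ealg n → Ealg n → Prop
  | sym (i j : Fin n) (h : i ≠ j) : relA n (xGen n ⟨(i, j), h⟩) (xGen n ⟨(j, i), h.symm⟩)
  | arnold (i j k : Fin n) (hij : i ≠ j) (hjk : j ≠ k) (hki : k ≠ i) :
      relA n (xGen n ⟨(i, j), hij⟩ * xGen n ⟨(j, k), hjk⟩ +
              xGen n ⟨(j, k), hjk⟩ * xGen n ⟨(k, i), hki⟩ +
              xGen n ⟨(k, i), hki⟩ * xGen n ⟨(i, j), hij⟩) 0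

/-- The Orlik–Solomon algebra `A = E/I` of `Conf(n, ℂ)`. -/
abbrev Aring (n : ℕ) := RingQuot (relA n)

/-- The quotient map `E → A`. -/
def mkA (n : ℕ) : Ealg n →ₐ[ℚ] Aring n := RingQuot.mkAlgHom ℚ (relA n)

/-- The degree-`i` piece of the exterior algebra. -/
def Edeg (n i : ℕ) : Submodule ℚ (Ealg n) :=
  LinearMap.range (ExteriorAlgebra.ι ℚ : (Pairs n → ℚ) →ₗ[ℚ] Ealg n) ^ i

/-- The degree-`i` piece `A^i` of `A`, the image of the degree-`i` part of `E`. -/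
def Adeg (n i : ℕ) : Submodule ℚ (Aring n) := (Edeg n i).map (mkA n).toLinearMap

/-- The reduced Orlik–Solomon algebra `B`, the subalgebra of `A` generated by the
differences `x_{ij} - x_{kl}` of the generators. -/
def Bsub (n : ℕ) : Subalgebra ℚ (Aring n) :=
  Algebra.adjoin ℚ {a | ∃ p q : Pairs n, a = mkA n (xGen n p) - mkA n (xGen n q)}

/-- The degree-`k` piece `B^k := B ∩ A^k` (zero in negative degrees). -/
def Bdeg (n : ℕ) (k : ℤ) : Submodule ℚ (Aring n) :=
  if 0 ≤ k then (Bsub n).toSubmodule ⊓ Adeg n k.toNat else ⊥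

/-- The element `t = Σ_{i ≠ j} x_{ij}` of `A`. -/
def tEl (n : ℕ) : Aring n := mkA n (∑ p : Pairs n, xGen n p)

/-!
Contraction with the sum of coordinates preserves the Orlik–Solomon relations, so it descends to an
antiderivation `∂` of `A` with `∂ x_{ij} = 1`. It kills the differences `x_{ij} - x_{kl}`, hence
`B`, while `∂ t` is the nonzero number `n (n - 1)`. Applying `∂` to `b + c t = 0` with `b, c ∈ B`
therefore gives `c = 0`. Conversely, the space `A¹` is `S + ℚ t` with `S` the span of the
differences; as `t² = 0` and `S t = t S`, the binomial theorem for the idempotent semiring of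
subspaces of `A` gives `Aⁱ⁺¹ = (S + ℚ t)ⁱ⁺¹ = Sⁱ⁺¹ + Sⁱ t`, which lies in `B + B t`.
-/

lemma add_pow_succ_of_mul_self_eq_zero {α : Type*} [IdemSemiring α] {s t : α}
    (hst : Commute s t) (ht : t * t = 0) (i : ℕ) :
    (s + t) ^ (i + 1) = s ^ (i + 1) + s ^ i * t := by
  induction i with
  | zero => simp
  | succ i ih =>
    calc (s + t) ^ (i + 2)
        = (s ^ (i + 1) + s ^ i * t) * (s + t) := by rw [pow_succ, ih]
      _ = s ^ (i + 1) * s + s ^ i * (t * s) + (s ^ (i + 1) * t + s ^ i * (t * t)) := by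
        simp only [mul_add, add_mul, mul_assoc]
      _ = s ^ (i + 2) + (s ^ (i + 1) * t + s ^ (i + 1) * t) := by
        rw [ht, ← hst.eq, ← mul_assoc, ← pow_succ, ← pow_succ, mul_zero, add_zero, add_assoc]
      _ = s ^ (i + 2) + s ^ (i + 1) * t := by rw [add_idem]

lemma ker_sumCoords_eq_span_sub {ι R M : Type*} [Ring R] [AddCommGroup M] [Module R M]
    (b : Module.Basis ι R M) :
    LinearMap.ker b.sumCoords = Submodule.span R {x | ∃ p q, x = b p - b q} := by
  apply le_antisymm
  · intro v hv
    have hsum : (b.repr v).sum (fun _ r => r) = 0 := by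
      rwa [LinearMap.mem_ker, Module.Basis.coe_sumCoords] at hv
    rcases isEmpty_or_nonempty ι with _ | ⟨⟨q⟩⟩
    · have : Subsingleton M := b.repr.toEquiv.subsingleton
      rw [Subsingleton.elim v 0]
      exact zero_mem _
    · have hv_eq : v = (b.repr v).sum fun p r => r • (b p - b q) := by
        have hq : (b.repr v).sum (fun _ r => r • b q) = 0 := by
          rw [Finsupp.sum, ← Finset.sum_smul]
          exact (congrArg (· • b q) hsum).trans (zero_smul R _)
        simp only [smul_sub, Finsupp.sum_sub, hq, sub_zero]
        rw [← Finsupp.linearCombination_apply, b.linearCombination_repr]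
      rw [hv_eq]
      exact Submodule.sum_mem _ fun p _ =>
        Submodule.smul_mem _ _ (Submodule.subset_span ⟨p, q, rfl⟩)
  · rw [Submodule.span_le]
    rintro _ ⟨p, q, rfl⟩
    rw [SetLike.mem_coe, LinearMap.mem_ker, map_sub, b.sumCoords_self_apply,
      b.sumCoords_self_apply, sub_self]

lemma eq_zero_and_eq_zero_of_add_mul_eq_zero {A : Type*} [Ring A] {D : A →+ A} {σ : A → A}
    (hD_mul : ∀ a b, D (a * b) = a * D b + D a * σ b) {b c t : A} (ht : IsUnit (D t))
    (hb : D b = 0) (hc : D c = 0) (h : b + c * t = 0) : b = 0 ∧ c = 0 := by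
  have hc_mul : c * D t = 0 := by
    simpa [hD_mul, hb, hc] using congrArg D h
  obtain rfl : c = 0 := ht.mul_left_eq_zero.mp hc_mul
  exact ⟨by simpa using h, rfl⟩

section Algebra

variable {R V A : Type*} [CommRing R] [AddCommGroup V] [Module R V] [Ring A] [Algebra R A]

lemma mul_span_singleton_eq_map_mulRight (S : Submodule R A) (a : A) :
    S * Submodule.span R {a} = S.map (LinearMap.mulRight R a) :=
  Submodule.ext fun _ => Submodule.mem_mul_span_singleton

lemma pow_le_toSubmodule {S : Submodule R A} {B : Subalgebra R A}
    (h : S ≤ Subalgebra.toSubmodule B) (i : ℕ) : S ^ i ≤ Subalgebra.toSubmodule B := by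
  induction i with
  | zero => simp [Submodule.one_le]
  | succ i ih =>
    rw [pow_succ, ← (Subalgebra.isIdempotentElem_toSubmodule B).eq]
    exact mul_le_mul' ih h

section Antiderivation

lemma eq_zero_of_mem_adjoin_of_leibniz {D : A →ₗ[R] A} {σ : A → A}
    (hD_one : D 1 = 0) (hD_mul : ∀ a b, D (a * b) = a * D b + D a * σ b)
    {s : Set A} (hs : ∀ x ∈ s, D x = 0) {b : A} (hb : b ∈ Algebra.adjoin R s) : D b = 0 := by
  induction hb using Algebra.adjoin_induction with
  | mem x hx => exact hs x hx
  | algebraMap r => rw [Algebra.algebraMap_eq_smul_one, map_smul, hD_one, smul_zero]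
  | add x y _ _ hx hy => rw [map_add, hx, hy, add_zero]
  | mul x y _ _ hx hy => rw [hD_mul, hx, hy, mul_zero, zero_mul, add_zero]

/-- The matrices `[[φ v, f v], [0, -φ v]]`. An algebra homomorphism `A → M₂(A)` extending
`φ v ↦ antiderivationMatrix φ f v` has the form `a ↦ [[a, ∂ a], [0, σ a]]`, and multiplicativity in
the upper right corner is the rule `∂ (a b) = a ∂ b + ∂ a σ b`: this encodes the antiderivation `∂`
extending `f` as an algebra homomorphism, so that universal properties produce it. -/
def antiderivationMatrix (φ : V →ₗ[R] A) (f : Module.Dual R V) :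
    V →ₗ[R] Matrix (Fin 2) (Fin 2) A where
  toFun v := !![φ v, algebraMap R A (f v); 0, -φ v]
  map_add' v w := by ext a b; fin_cases a <;> fin_cases b <;> simp [add_comm]
  map_smul' r v := by
    ext a b; fin_cases a <;> fin_cases b <;> simp [Algebra.smul_def]

variable {φ : V →ₗ[R] A} {f : Module.Dual R V}

lemma antiderivationMatrix_apply (v : V) :
    antiderivationMatrix φ f v = !![φ v, algebraMap R A (f v); 0, -φ v] := rfl

lemma antiderivationMatrix_mul_self (hφ : ∀ v, φ v * φ v = 0) (v : V) :
    antiderivationMatrix φ f v * antiderivationMatrix φ f v = 0 := by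
  rw [antiderivationMatrix_apply, Matrix.mul_fin_two]
  ext a b
  fin_cases a <;> fin_cases b <;> simp [hφ, Algebra.commutes]

lemma column_zero_of_extends_antiderivationMatrix {D : A →ₐ[R] Matrix (Fin 2) (Fin 2) A}
    (hD : ∀ v, D (φ v) = antiderivationMatrix φ f v) {a : A}
    (ha : a ∈ Algebra.adjoin R (Set.range φ)) : D a 0 0 = a ∧ D a 1 0 = 0 := by
  induction ha using Algebra.adjoin_induction with
  | mem x hx =>
    obtain ⟨v, rfl⟩ := hx
    simp [hD, antiderivationMatrix_apply]
  | algebraMap r => simp [AlgHom.commutes, Matrix.algebraMap_matrix_apply]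
  | add x y _ _ hx hy => simp [hx, hy]
  | mul x y _ _ hx hy => simp [Matrix.mul_apply, hx, hy]

end Antiderivation

section SquareZero

variable {φ : V →ₗ[R] A}

lemma mul_eq_neg_mul_of_mul_self_eq_zero (hφ : ∀ v, φ v * φ v = 0) (v w : V) :
    φ v * φ w = -(φ w * φ v) := by
  have h := hφ (v + w)
  simp only [map_add, add_mul, mul_add, hφ, zero_add, add_zero] at h
  exact eq_neg_of_add_eq_zero_right h

lemma map_mul_map_le_of_mul_self_eq_zero (hφ : ∀ v, φ v * φ v = 0) (U W : Submodule R V) :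
    U.map φ * W.map φ ≤ W.map φ * U.map φ := by
  rw [Submodule.mul_le]
  rintro _ ⟨u, hu, rfl⟩ _ ⟨w, hw, rfl⟩
  rw [mul_eq_neg_mul_of_mul_self_eq_zero hφ]
  exact neg_mem (Submodule.mul_mem_mul (Submodule.mem_map_of_mem hw) (Submodule.mem_map_of_mem hu))

lemma commute_map_of_mul_self_eq_zero (hφ : ∀ v, φ v * φ v = 0) (U W : Submodule R V) :
    Commute (U.map φ) (W.map φ) :=
  le_antisymm (map_mul_map_le_of_mul_self_eq_zero hφ U W)
    (map_mul_map_le_of_mul_self_eq_zero hφ W U)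

end SquareZero

end Algebra

section Field

variable {K V A : Type*} [Field K] [AddCommGroup V] [Module K V] [Ring A] [Algebra K A]
  {φ : V →ₗ[K] A} {f : Module.Dual K V} {x : V}

lemma range_pow_succ_eq_sup (hφ : ∀ v, φ v * φ v = 0) (hx : f x ≠ 0) (i : ℕ) :
    LinearMap.range φ ^ (i + 1) = (LinearMap.ker f).map φ ^ (i + 1) ⊔
      ((LinearMap.ker f).map φ ^ i).map (LinearMap.mulRight K (φ x)) := by
  have hrange : LinearMap.range φ = (LinearMap.ker f).map φ + (K ∙ x).map φ := by
    rw [Submodule.add_eq_sup, ← Submodule.map_sup, sup_comm,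
      LinearMap.span_singleton_sup_ker_eq_top f hx, LinearMap.range_eq_map]
  have hsq : (K ∙ x).map φ * (K ∙ x).map φ = 0 := by
    simp [Submodule.map_span, Submodule.span_mul_span, hφ]
  rw [hrange, add_pow_succ_of_mul_self_eq_zero (commute_map_of_mul_self_eq_zero hφ _ _) hsq,
    Submodule.add_eq_sup, Submodule.map_span, Set.image_singleton,
    mul_span_singleton_eq_map_mulRight]

lemma range_pow_succ_eq_inf_sup_map_inf (hφ : ∀ v, φ v * φ v = 0) (hx : f x ≠ 0)
    {B : Subalgebra K A} (hB : (LinearMap.ker f).map φ ≤ Subalgebra.toSubmodule B) (i : ℕ) :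
    LinearMap.range φ ^ (i + 1) =
      (Subalgebra.toSubmodule B ⊓ LinearMap.range φ ^ (i + 1)) ⊔
        (Subalgebra.toSubmodule B ⊓ LinearMap.range φ ^ i).map (LinearMap.mulRight K (φ x)) := by
  have hpow (j : ℕ) :
      (LinearMap.ker f).map φ ^ j ≤ Subalgebra.toSubmodule B ⊓ LinearMap.range φ ^ j :=
    le_inf (pow_le_toSubmodule hB j) (pow_le_pow_left' LinearMap.map_le_range j)
  apply le_antisymm
  · calc LinearMap.range φ ^ (i + 1)
        = _ ⊔ _ := range_pow_succ_eq_sup hφ hx i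
      _ ≤ _ := sup_le_sup (hpow _) (Submodule.map_mono (hpow _))
  · refine sup_le inf_le_right ?_
    rintro _ ⟨c, hc, rfl⟩
    rw [pow_succ]
    exact Submodule.mul_mem_mul hc.2 ⟨x, rfl⟩

end Field

section OrlikSolomon

/-- The linear map `v ↦ Σ v_{ij} x_{ij}` onto the degree-one part of `A`. -/
def linearForm (n : ℕ) : (Pairs n → ℚ) →ₗ[ℚ] Aring n :=
  (mkA n).toLinearMap ∘ₗ ExteriorAlgebra.ι ℚ

/-- The sum of coordinates, a functional on linear forms with value `1` on every `x_{ij}`; the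
antiderivation `boundary` extends it to `A`. -/
def coordSum (n : ℕ) : Module.Dual ℚ (Pairs n → ℚ) :=
  (Pi.basisFun ℚ (Pairs n)).sumCoords

variable (n : ℕ)

lemma linearForm_mul_self (v : Pairs n → ℚ) : linearForm n v * linearForm n v = 0 := by
  simp [linearForm, ← map_mul]

lemma linearForm_single (p : Pairs n) : linearForm n (Pi.single p 1) = mkA n (xGen n p) := rfl

lemma coordSum_single (p : Pairs n) : coordSum n (Pi.single p 1) = 1 := by
  rw [coordSum, ← Pi.basisFun_apply, Module.Basis.sumCoords_self_apply]

lemma tEl_eq_linearForm_one : tEl n = linearForm n 1 := by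
  rw [← Finset.univ_sum_single (1 : Pairs n → ℚ)]
  simp [tEl, linearForm_single]

variable {n} in
lemma coordSum_one_ne_zero (hn : 2 ≤ n) : coordSum n 1 ≠ 0 := by
  have : Nonempty (Pairs n) := ⟨⟨(⟨0, by omega⟩, ⟨1, by omega⟩), by simp⟩⟩
  rw [← Finset.univ_sum_single (1 : Pairs n → ℚ)]
  simp [coordSum_single, -Fintype.card_subtype_compl]

lemma Adeg_eq_range_linearForm_pow (i : ℕ) : Adeg n i = LinearMap.range (linearForm n) ^ i := by
  rw [Adeg, Edeg, Submodule.map_pow, linearForm, LinearMap.range_comp]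

lemma Bsub_eq_adjoin_map_ker_coordSum :
    Bsub n =
      Algebra.adjoin ℚ ((LinearMap.ker (coordSum n)).map (linearForm n) : Set (Aring n)) := by
  rw [coordSum, ker_sumCoords_eq_span_sub, Submodule.map_span, Algebra.adjoin_span, Bsub]
  congr 1
  ext a
  simp [linearForm_single, ← exists_and_right, eq_comm]

lemma map_ker_coordSum_le_Bsub :
    (LinearMap.ker (coordSum n)).map (linearForm n) ≤ Subalgebra.toSubmodule (Bsub n) := by
  rw [Bsub_eq_adjoin_map_ker_coordSum]
  exact Algebra.subset_adjoin

lemma adjoin_range_linearForm : Algebra.adjoin ℚ (Set.range (linearForm n)) = ⊤ := by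
  have hι : Algebra.adjoin ℚ (Set.range (ExteriorAlgebra.ι ℚ)) = (⊤ : Subalgebra ℚ (Ealg n)) :=
    CliffordAlgebra.adjoin_range_ι
  have hmk : (mkA n).range = ⊤ :=
    (AlgHom.range_eq_top _).mpr (RingQuot.mkAlgHom_surjective ℚ (relA n))
  rw [linearForm, LinearMap.coe_comp, Set.range_comp]
  exact (AlgHom.map_adjoin (mkA n) _).symm.trans (by rw [hι, Algebra.map_top, hmk])

lemma mkA_eq_of_relA {x y : Ealg n} (h : relA n x y) : mkA n x = mkA n y :=
  RingQuot.mkAlgHom_rel ℚ h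

/-- The extension of `antiderivationMatrix` to the exterior algebra. -/
def boundaryMatrixE : Ealg n →ₐ[ℚ] Matrix (Fin 2) (Fin 2) (Aring n) :=
  ExteriorAlgebra.lift ℚ ⟨antiderivationMatrix (linearForm n) (coordSum n),
    antiderivationMatrix_mul_self (linearForm_mul_self n)⟩

lemma boundaryMatrixE_ι (v : Pairs n → ℚ) : boundaryMatrixE n (ExteriorAlgebra.ι ℚ v) =
    antiderivationMatrix (linearForm n) (coordSum n) v :=
  ExteriorAlgebra.lift_ι_apply ..

lemma boundaryMatrixE_xGen (p : Pairs n) :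
    boundaryMatrixE n (xGen n p) = !![mkA n (xGen n p), 1; 0, -mkA n (xGen n p)] := by
  rw [xGen, boundaryMatrixE_ι, antiderivationMatrix_apply, coordSum_single, map_one,
    linearForm_single, xGen]

lemma boundaryMatrixE_eq_of_relA ⦃x y : Ealg n⦄ (h : relA n x y) :
    boundaryMatrixE n x = boundaryMatrixE n y := by
  have hA := mkA_eq_of_relA n h
  cases h with
  | sym i j h => rw [boundaryMatrixE_xGen, boundaryMatrixE_xGen, hA]
  | arnold i j k hij hjk hki =>
    simp only [map_add, map_mul, map_zero] at hA
    simp only [map_add, map_mul, map_zero, boundaryMatrixE_xGen, Matrix.mul_fin_two]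
    ext a b
    fin_cases a <;> fin_cases b <;> simp [hA]

/-- The homomorphism `a ↦ [[a, ∂ a], [0, σ a]]` from `A` to `M₂(A)`, where `σ` is the sign
automorphism, `σ x_{ij} = -x_{ij}`. -/
def boundaryMatrix : Aring n →ₐ[ℚ] Matrix (Fin 2) (Fin 2) (Aring n) :=
  RingQuot.liftAlgHom ℚ ⟨boundaryMatrixE n, boundaryMatrixE_eq_of_relA n⟩

lemma boundaryMatrix_linearForm (v : Pairs n → ℚ) : boundaryMatrix n (linearForm n v) =
    antiderivationMatrix (linearForm n) (coordSum n) v :=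
  (RingQuot.liftAlgHom_mkAlgHom_apply ..).trans (boundaryMatrixE_ι n v)

/-- The antiderivation `∂` of the Orlik–Solomon algebra with `∂ x_{ij} = 1`. It obeys the Leibniz
rule with the sign on the right-hand factor, `∂ (a b) = a ∂ b + ∂ a σ b`. -/
def boundary : Aring n →ₗ[ℚ] Aring n :=
  Matrix.entryLinearMap ℚ (Aring n) 0 1 ∘ₗ (boundaryMatrix n).toLinearMap

lemma boundary_apply (a : Aring n) : boundary n a = boundaryMatrix n a 0 1 := rfl

lemma boundary_one : boundary n 1 = 0 := by
  simp [boundary_apply]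

lemma boundary_mul (a b : Aring n) :
    boundary n (a * b) = a * boundary n b + boundary n a * boundaryMatrix n b 1 1 := by
  have ha : boundaryMatrix n a 0 0 = a :=
    (column_zero_of_extends_antiderivationMatrix (boundaryMatrix_linearForm n)
      (adjoin_range_linearForm n ▸ Algebra.mem_top)).1
  simp [boundary_apply, Matrix.mul_apply, ha]

lemma boundary_linearForm (v : Pairs n → ℚ) :
    boundary n (linearForm n v) = algebraMap ℚ (Aring n) (coordSum n v) := by
  simp [boundary_apply, boundaryMatrix_linearForm, antiderivationMatrix_apply]

variable {n}

lemma boundary_eq_zero_of_mem_Bsub {b : Aring n} (hb : b ∈ Bsub n) : boundary n b = 0 := by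
  rw [Bsub_eq_adjoin_map_ker_coordSum] at hb
  refine eq_zero_of_mem_adjoin_of_leibniz (boundary_one n) (boundary_mul n) ?_ hb
  rintro _ ⟨v, hv, rfl⟩
  rw [boundary_linearForm, LinearMap.mem_ker.mp hv, map_zero]

lemma isUnit_boundary_tEl (hn : 2 ≤ n) : IsUnit (boundary n (tEl n)) := by
  rw [tEl_eq_linearForm_one, boundary_linearForm]
  exact (coordSum_one_ne_zero hn).isUnit.map _

lemma eq_zero_and_eq_zero_of_add_mul_tEl_eq_zero (hn : 2 ≤ n) {b c : Aring n} (hb : b ∈ Bsub n)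
    (hc : c ∈ Bsub n) (h : b + c * tEl n = 0) : b = 0 ∧ c = 0 :=
  eq_zero_and_eq_zero_of_add_mul_eq_zero (D := (boundary n).toAddMonoidHom) (boundary_mul n)
    (isUnit_boundary_tEl hn) (boundary_eq_zero_of_mem_Bsub hb) (boundary_eq_zero_of_mem_Bsub hc) h

variable (n)

lemma Bdeg_natCast (i : ℕ) : Bdeg n i = Subalgebra.toSubmodule (Bsub n) ⊓ Adeg n i := by
  simp [Bdeg]

lemma Bdeg_le_Bsub (k : ℤ) : Bdeg n k ≤ Subalgebra.toSubmodule (Bsub n) := by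
  unfold Bdeg
  split_ifs
  exacts [inf_le_left, bot_le]

lemma Adeg_zero_le_Bsub : Adeg n 0 ≤ Subalgebra.toSubmodule (Bsub n) := by
  simp [Adeg_eq_range_linearForm_pow, Submodule.one_le]

variable {n} in
lemma Adeg_eq_sup (hn : 2 ≤ n) (i : ℕ) :
    Adeg n i = Bdeg n i ⊔ (Bdeg n ((i : ℤ) - 1)).map (LinearMap.mulRight ℚ (tEl n)) := by
  cases i with
  | zero =>
    have hneg : Bdeg n (((0 : ℕ) : ℤ) - 1) = ⊥ := by simp [Bdeg]
    rw [hneg, Submodule.map_bot, sup_bot_eq, Bdeg_natCast, inf_eq_right.mpr (Adeg_zero_le_Bsub n)]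
  | succ i =>
    rw [show ((i + 1 : ℕ) : ℤ) - 1 = i by simp, Bdeg_natCast, Bdeg_natCast,
      Adeg_eq_range_linearForm_pow, Adeg_eq_range_linearForm_pow, tEl_eq_linearForm_one]
    exact range_pow_succ_eq_inf_sup_map_inf (linearForm_mul_self n) (coordSum_one_ne_zero hn)
      (map_ker_coordSum_le_Bsub n) i

instance finite_Adeg (i : ℕ) : Module.Finite ℚ (Adeg n i) := by
  rw [Module.Finite.iff_fg, Adeg_eq_range_linearForm_pow]
  exact (Submodule.fg_range _).pow i

instance finite_Bdeg (k : ℤ) : Module.Finite ℚ (Bdeg n k) := by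
  have hle : Bdeg n k ≤ Adeg n k.toNat := by
    unfold Bdeg
    split_ifs
    exacts [inf_le_right, bot_le]
  exact Submodule.finiteDimensional_of_le hle

/-- The degree-`i` part `(b, c) ↦ b + c t` of the multiplication map `B ⊗ Λ[t] → A`. -/
def addMulT (i : ℕ) : Bdeg n i × Bdeg n ((i : ℤ) - 1) →ₗ[ℚ] Aring n :=
  (Bdeg n i).subtype.coprod (LinearMap.mulRight ℚ (tEl n) ∘ₗ (Bdeg n ((i : ℤ) - 1)).subtype)

variable {n}

lemma addMulT_injective (hn : 2 ≤ n) (i : ℕ) : Function.Injective (addMulT n i) := by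
  rw [injective_iff_map_eq_zero]
  rintro ⟨⟨b, hb⟩, ⟨c, hc⟩⟩ h
  obtain ⟨rfl, rfl⟩ := eq_zero_and_eq_zero_of_add_mul_tEl_eq_zero hn
    (Bdeg_le_Bsub n _ hb) (Bdeg_le_Bsub n _ hc) h
  rfl

lemma range_addMulT (hn : 2 ≤ n) (i : ℕ) : LinearMap.range (addMulT n i) = Adeg n i := by
  rw [addMulT, LinearMap.range_coprod, LinearMap.range_comp, Submodule.range_subtype,
    Submodule.range_subtype, Adeg_eq_sup hn]

end OrlikSolomon

/-- With `B ⊆ A` the reduced Orlik–Solomon subalgebra and `t = Σ_{i≠j} x_{ij}`, the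
multiplication map `B^i × B^{i-1} → A`, `(b, c) ↦ b + c·t`, is injective with image
`A^i`; thus `A ≅ B ⊗ Λ[t]` as graded vector spaces and in particular
`dim A^i = dim B^i + dim B^{i-1}`. -/
theorem stmt15 (n : ℕ) (hn : 2 ≤ n) (i : ℕ) :
    Function.Injective
      (fun bc : Bdeg n i × Bdeg n ((i : ℤ) - 1) =>
        (bc.1.1 : Aring n) + bc.2.1 * tEl n) ∧
    Set.range
      (fun bc : Bdeg n i × Bdeg n ((i : ℤ) - 1) =>
        (bc.1.1 : Aring n) + bc.2.1 * tEl n) = (Adeg n i : Set (Aring n)) ∧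
    Module.finrank ℚ (Adeg n i) =
      Module.finrank ℚ (Bdeg n i) + Module.finrank ℚ (Bdeg n ((i : ℤ) - 1)) := by
  have hinj := addMulT_injective hn i
  have hrange := range_addMulT hn i
  refine ⟨hinj, ?_, ?_⟩
  · rw [← hrange]
    rfl
  · rw [← hrange, LinearMap.finrank_range_of_inj hinj, Module.finrank_prod]

end
end
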